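/- Let f : A* → A* be a morphism generating a pure morphic word x = f^ω(a). If t is an infinite word in the shift orbit closure of x satisfying f(t) = t, then t is a morphic word. -/

import Mathlib

/-- The prefix of length `n` of an infinite word. -/
def wordPrefix {A : Type*} (x : ℕ → A) (n : ℕ) : List A :=
  List.ofFn (fun i : Fin n => x i)

/-- A finite word is a prefix of an infinite word. -/
def IsPrefixOfWord {A : Type*} (w : List A) (x : ℕ → A) : Prop :=
  wordPrefix x w.length = w

/-- A finite word is a factor of an infinite word. -/
def IsFactor {A : Type*} (w : List A) (x : ℕ → A) : Prop :=
  ∃ i, w = List.ofFn (fun j : Fin w.length => x (i + j))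

/-- `y` belongs to the shift orbit closure of `x`. -/
def InOrbitClosure {A : Type*} (y x : ℕ → A) : Prop :=
  ∀ w, IsFactor w y → IsFactor w x

/-- A morphism `A* → B*` applied to a finite word. -/
def applyMorphism {A B : Type*} (f : A → List B) (w : List A) : List B :=
  w.flatMap f

/-- The `n`-th iterate of a morphism applied to a finite word. -/
def applyIter {A : Type*} (f : A → List A) (n : ℕ) (w : List A) : List A :=
  (applyMorphism f)^[n] w

/-- `y = f(x)` for infinite words: every image of a prefix of `x` is a prefix of `y`. -/
def IsWordImage {A B : Type*} (f : A → List B) (x : ℕ → A) (y : ℕ → B) : Prop :=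
  ∀ n, IsPrefixOfWord (applyMorphism f (wordPrefix x n)) y

/-- Prepend a finite word to an infinite word. -/
def prepend {A : Type*} (w : List A) (x : ℕ → A) : ℕ → A :=
  fun n => if h : n < w.length then w.get ⟨n, h⟩ else x (n - w.length)

/-- Strict lexicographic order on infinite words induced by the order `r` on letters. -/
def LexLt {A : Type*} (r : A → A → Prop) (x y : ℕ → A) : Prop :=
  ∃ n, (∀ i, i < n → x i = y i) ∧ r (x n) (y n)

def LexLe {A : Type*} (r : A → A → Prop) (x y : ℕ → A) : Prop :=
  LexLt r x y ∨ x = y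

/-- `l` is the lexicographically least word (w.r.t. `r`) in the shift orbit closure
of `x` beginning with the letter `a`. -/
def IsLeastWord {A : Type*} (r : A → A → Prop) (x : ℕ → A) (a : A) (l : ℕ → A) : Prop :=
  InOrbitClosure l x ∧ l 0 = a ∧ ∀ y, InOrbitClosure y x → y 0 = a → LexLe r l y

/-- `f` is prolongable on `a` (and generates an infinite word from `a`). -/
def IsGenerating {A : Type*} (f : A → List A) (a : A) : Prop :=
  ∃ s, f a = a :: s ∧ s ≠ [] ∧ ∀ n, applyIter f n s ≠ []

/-- `x` is the pure morphic word `f^ω(a)`. -/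
def IsPureMorphic {A : Type*} (f : A → List A) (a : A) (x : ℕ → A) : Prop :=
  x 0 = a ∧ IsGenerating f a ∧ IsWordImage f x x

/-- `x` is a morphic word: the image under a coding of a pure morphic word. -/
def IsMorphic {B : Type*} (x : ℕ → B) : Prop :=
  ∃ (k : ℕ) (g : Fin k → List (Fin k)) (b : Fin k) (c : Fin k → B) (t : ℕ → Fin k),
    IsPureMorphic g b t ∧ x = c ∘ t

/-- `f ∈ M_x`: each letter `b` has a nonempty "marker" word `p b` such that `f(y)`
begins with `p b` whenever `y ∈ S_x` begins with `b`, and the markers of distinct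
letters are prefix-incomparable. -/
def MemM {A B : Type*} (f : A → List B) (x : ℕ → A) : Prop :=
  ∃ p : A → List B, (∀ b, p b ≠ []) ∧
    (∀ (b : A) (y : ℕ → A), InOrbitClosure y x → y 0 = b →
      ∃ n, p b <+: applyMorphism f (wordPrefix y n)) ∧
    (∀ a b : A, a ≠ b → ¬ p a <+: p b ∧ ¬ p b <+: p a)

/-- Every factor occurs infinitely often. -/
def Recurrent {A : Type*} (x : ℕ → A) : Prop :=
  ∀ w, IsFactor w x → ∀ N, ∃ i, N ≤ i ∧ w = List.ofFn (fun j : Fin w.length => x (i + j))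

/-- Ultimately periodic infinite word. -/
def UltimatelyPeriodic {A : Type*} (x : ℕ → A) : Prop :=
  ∃ N p, 0 < p ∧ ∀ n, N ≤ n → x (n + p) = x n

/-- The period-doubling morphism `0 ↦ 01`, `1 ↦ 00`. -/
def pdMorph : Bool → List Bool := fun b => if b then [false, false] else [false, true]

/-- The morphism `0 ↦ 0001`, `1 ↦ 0101`. -/
def gMorph : Bool → List Bool :=
  fun b => if b then [false, true, false, true] else [false, false, false, true]

/-- The Chacon morphism `0 ↦ 0010`, `1 ↦ 1`. -/
def chMorph : Bool → List Bool := fun b => if b then [true] else [false, false, true, false]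

/-- The Rudin–Shapiro morphism `0 ↦ 01`, `1 ↦ 02`, `2 ↦ 31`, `3 ↦ 32`. -/
def rsMorph : Fin 4 → List (Fin 4) := ![[0, 1], [0, 2], [3, 1], [3, 2]]

/-- The Rudin–Shapiro coding `0 ↦ 0`, `1 ↦ 0`, `2 ↦ 1`, `3 ↦ 1`. -/
def rsCoding : Fin 4 → Bool := ![false, false, true, true]

/-- The 2-bit binary representation morphism `0 ↦ 00`, `1 ↦ 01`, `2 ↦ 10`, `3 ↦ 11`. -/
def hMorph : Fin 4 → List Bool := ![[false, false], [false, true], [true, false], [true, true]]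

/-!
Suppose first that some prefix of `t` is growing. The shortest such prefix `u` satisfies
`f(u) = uv`, hence `t = u v f(v) f²(v) ⋯`, which codes the word generated from a new letter `⋆` by
`⋆ ↦ ⋆v`.

Otherwise every prefix of `t` is a bounded factor of some `fⁿ(c)`. If `f^P(d) = l d r` with `l`
bounded and `d` growing, and `P` is a period of the eventually periodic sequence `fⁿ(l)`, then for
large `n` the longest bounded prefix of `f^(n+kP)(d)` is the power `fⁿ(l)^k` followed by a bounded
prefix of `fⁿ(d)`. Since every growing letter leads to such a `d`, the bounded prefixes, by reversal
the bounded suffixes, and hence all bounded factors of the words `fⁿ(c)` have period `p` up to a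
bounded number of defects, where `p = K!` is a common multiple of the lengths involved. So `t` has
finitely many defects: it is ultimately periodic.
-/

section Words

variable {A B : Type*} {w v : List A} {x y : ℕ → A}

@[simp]
theorem length_wordPrefix (x : ℕ → A) (n : ℕ) : (wordPrefix x n).length = n :=
  List.length_ofFn

@[simp]
theorem getElem_wordPrefix (x : ℕ → A) {n i : ℕ} (h : i < (wordPrefix x n).length) :
    (wordPrefix x n)[i] = x i :=
  List.getElem_ofFn h

theorem isPrefixOfWord_iff : IsPrefixOfWord w x ↔ ∀ i (h : i < w.length), w[i] = x i := by
  simp [IsPrefixOfWord, List.ext_getElem_iff, eq_comm]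

theorem isPrefixOfWord_wordPrefix (x : ℕ → A) (n : ℕ) : IsPrefixOfWord (wordPrefix x n) x := by
  simp [IsPrefixOfWord]

theorem IsPrefixOfWord.of_prefix (hv : IsPrefixOfWord v x) (h : w <+: v) :
    IsPrefixOfWord w x :=
  isPrefixOfWord_iff.2 fun i hi =>
    (h.getElem hi).trans (isPrefixOfWord_iff.1 hv i (hi.trans_le h.length_le))

theorem IsPrefixOfWord.prefix_of_length_le (hw : IsPrefixOfWord w x) (hv : IsPrefixOfWord v x)
    (h : w.length ≤ v.length) : w <+: v :=
  List.prefix_iff_getElem.2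
    ⟨h, fun i hi => (isPrefixOfWord_iff.1 hw i hi).trans (isPrefixOfWord_iff.1 hv i _).symm⟩

theorem IsPrefixOfWord.map (h : IsPrefixOfWord w x) (c : A → B) :
    IsPrefixOfWord (w.map c) (c ∘ x) := by
  simp_all [isPrefixOfWord_iff]

theorem map_wordPrefix (c : A → B) (x : ℕ → A) (n : ℕ) :
    (wordPrefix x n).map c = wordPrefix (c ∘ x) n :=
  List.map_ofFn

theorem isPrefixOfWord_append_prepend :
    IsPrefixOfWord (w ++ v) (prepend w x) ↔ IsPrefixOfWord v x := by
  simp only [isPrefixOfWord_iff, List.length_append, prepend, List.get_eq_getElem]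
  refine ⟨fun h i hi => by simpa using h (w.length + i) (by omega), fun h i hi => ?_⟩
  split_ifs with hiw
  · exact List.getElem_append_left hiw
  · rw [List.getElem_append_right (not_lt.1 hiw)]
    exact h _ (by omega)

theorem IsPrefixOfWord.eq_prepend (h : IsPrefixOfWord w x) :
    x = prepend w fun n => x (w.length + n) := by
  funext n
  by_cases hn : n < w.length
  · simp [prepend, hn, isPrefixOfWord_iff.1 h n hn]
  · simp [prepend, hn, Nat.add_sub_cancel' (not_lt.1 hn)]

theorem wordPrefix_prepend (w : List A) (x : ℕ → A) (n : ℕ) :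
    wordPrefix (prepend w x) (w.length + n) = w ++ wordPrefix x n := by
  have h := isPrefixOfWord_append_prepend (w := w).2 (isPrefixOfWord_wordPrefix x n)
  rwa [IsPrefixOfWord, List.length_append, length_wordPrefix] at h

theorem prepend_append (w v : List A) (x : ℕ → A) :
    prepend (w ++ v) x = prepend w (prepend v x) := by
  funext n
  rcases lt_or_ge n w.length with hw | hw
  · simp [prepend, hw, Nat.lt_add_right]
  · simp [prepend, hw.not_gt, List.getElem_append_right hw, Nat.sub_lt_iff_lt_add' hw, Nat.sub_sub]

theorem prepend_nil (x : ℕ → A) : prepend [] x = x :=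
  rfl

theorem comp_prepend (c : A → B) (w : List A) (x : ℕ → A) :
    c ∘ prepend w x = prepend (w.map c) (c ∘ x) := by
  funext n
  by_cases hn : n < w.length <;> simp [prepend, hn]

theorem IsPrefixOfWord.isFactor (h : IsPrefixOfWord w x) : IsFactor w x :=
  ⟨0, by simpa [wordPrefix] using h.symm⟩

theorem IsFactor.exists_isPrefixOfWord_append (h : IsFactor w x) :
    ∃ u, IsPrefixOfWord (u ++ w) x := by
  obtain ⟨i, hi⟩ := h
  refine ⟨wordPrefix x i, ?_⟩
  rw [hi, IsPrefixOfWord, List.length_append, length_wordPrefix, List.length_ofFn]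
  exact List.ofFn_add

end Words

section Morphisms

variable {A B : Type*} {f : A → List A}

theorem applyMorphism_append (g : A → List B) (u v : List A) :
    applyMorphism g (u ++ v) = applyMorphism g u ++ applyMorphism g v :=
  List.flatMap_append

theorem applyMorphism_map {φ : A → B} {g : B → List B} (h : ∀ a, g (φ a) = (f a).map φ)
    (w : List A) : applyMorphism g (w.map φ) = (applyMorphism f w).map φ := by
  simp only [applyMorphism, List.flatMap_map, List.map_flatMap, h]

theorem IsWordImage.isPrefixOfWord {g : A → List B} {x : ℕ → A} {y : ℕ → B}
    (h : IsWordImage g x y) {w : List A} (hw : IsPrefixOfWord w x) :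
    IsPrefixOfWord (applyMorphism g w) y :=
  hw ▸ h w.length

theorem IsWordImage.map {φ : A → B} {g : B → List B} {x y : ℕ → A}
    (hφ : ∀ a, g (φ a) = (f a).map φ) (h : IsWordImage f x y) :
    IsWordImage g (φ ∘ x) (φ ∘ y) := by
  intro n
  rw [← map_wordPrefix, applyMorphism_map hφ]
  exact (h n).map φ

theorem isWordImage_prepend_iff {g : A → List B} {x : ℕ → A} {y : ℕ → B} (w : List A) :
    IsWordImage g (prepend w x) (prepend (applyMorphism g w) y) ↔ IsWordImage g x y := by
  have key (n : ℕ) : IsPrefixOfWord (applyMorphism g (wordPrefix (prepend w x) (w.length + n)))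
      (prepend (applyMorphism g w) y) ↔ IsPrefixOfWord (applyMorphism g (wordPrefix x n)) y := by
    rw [wordPrefix_prepend, applyMorphism_append, isPrefixOfWord_append_prepend]
  refine ⟨fun h n => (key n).1 (h _), fun h n => ?_⟩
  obtain ⟨r, hr⟩ := (isPrefixOfWord_wordPrefix (prepend w x) n).prefix_of_length_le
    (isPrefixOfWord_wordPrefix _ (w.length + n)) (by simp)
  refine ((key n).2 (h n)).of_prefix ?_
  rw [← hr, applyMorphism_append]
  exact List.prefix_append _ _

variable (f)

theorem applyIter_succ (n : ℕ) (w : List A) :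
    applyIter f (n + 1) w = applyIter f n (applyMorphism f w) :=
  rfl

theorem applyIter_succ' (n : ℕ) (w : List A) :
    applyIter f (n + 1) w = applyMorphism f (applyIter f n w) :=
  Function.iterate_succ_apply' _ n w

theorem applyIter_succ_singleton (n : ℕ) (a : A) :
    applyIter f (n + 1) [a] = applyIter f n (f a) := by
  rw [applyIter_succ, applyMorphism, List.flatMap_singleton]

theorem applyIter_add (m n : ℕ) (w : List A) :
    applyIter f (m + n) w = applyIter f m (applyIter f n w) :=
  Function.iterate_add_apply _ m n w

theorem applyIter_nil (n : ℕ) : applyIter f n [] = [] :=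
  Function.iterate_fixed rfl n

theorem applyIter_append (n : ℕ) (u v : List A) :
    applyIter f n (u ++ v) = applyIter f n u ++ applyIter f n v := by
  induction n generalizing u v with
  | zero => rfl
  | succ n ih => rw [applyIter_succ, applyMorphism_append, ih, ← applyIter_succ, ← applyIter_succ]

theorem applyIter_cons (n : ℕ) (a : A) (w : List A) :
    applyIter f n (a :: w) = applyIter f n [a] ++ applyIter f n w :=
  applyIter_append f n [a] w

theorem applyIter_map {φ : A → B} {g : B → List B} (h : ∀ a, g (φ a) = (f a).map φ)
    (n : ℕ) (w : List A) : applyIter g n (w.map φ) = (applyIter f n w).map φ := by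
  induction n generalizing w with
  | zero => rfl
  | succ n ih => rw [applyIter_succ, applyMorphism_map h, ih, applyIter_succ]

theorem applyIter_reverse (n : ℕ) (w : List A) :
    applyIter (fun a => (f a).reverse) n w.reverse = (applyIter f n w).reverse := by
  induction n generalizing w with
  | zero => rfl
  | succ n ih =>
    rw [applyIter_succ, applyIter_succ, ← ih, applyMorphism, applyMorphism, List.reverse_flatMap]
    rfl

end Morphisms

section MorphicWords

variable {A B : Type*} {f : A → List A} {v : List A} {z : ℕ → A}

theorem IsPureMorphic.isMorphic [Finite A] {a : A} {x : ℕ → A} (h : IsPureMorphic f a x) :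
    IsMorphic x := by
  obtain ⟨k, ⟨e⟩⟩ := Finite.exists_equiv_fin A
  obtain ⟨h0, ⟨s, hs, hs0, hsn⟩, himg⟩ := h
  let g : Fin k → List (Fin k) := fun i => (f (e.symm i)).map e
  have hg : ∀ a, g (e a) = (f a).map e := by simp [g]
  refine ⟨k, g, e a, e.symm, e ∘ x,
    ⟨congrArg e h0, ⟨s.map e, by simp [g, hs], by simpa using hs0, fun n => ?_⟩, himg.map hg⟩, ?_⟩
  · simpa [applyIter_map f hg] using hsn n
  · simp [← Function.comp_assoc]

theorem IsMorphic.comp {x : ℕ → A} (h : IsMorphic x) (c : A → B) : IsMorphic (c ∘ x) := by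
  obtain ⟨k, g, b, c', s, hs, rfl⟩ := h
  exact ⟨k, g, b, c ∘ c', s, hs, rfl⟩

theorem isPureMorphic_prepend_none (hv : ∀ n, applyIter f n v ≠ [])
    (hz : IsWordImage f (prepend v z) z) :
    IsPureMorphic (fun o : Option A => o.elim (none :: v.map some) fun a => (f a).map some) none
      (prepend [none] (some ∘ prepend v z)) := by
  set g : Option A → List (Option A) := fun o => o.elim (none :: v.map some) fun a => (f a).map some
  have hg : ∀ a, g (some a) = (f a).map some := fun _ => rfl
  refine ⟨rfl, ⟨v.map some, rfl, by simpa using! hv 0, fun n => ?_⟩, ?_⟩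
  · simpa [applyIter_map f hg] using hv n
  · have himage : prepend [none] (some ∘ prepend v z) =
        prepend (applyMorphism g [none]) (some ∘ z) := by
      rw [comp_prepend, ← prepend_append]
      simp [applyMorphism, g]
    nth_rw 2 [himage]
    exact (isWordImage_prepend_iff _).2 (hz.map hg)

theorem isMorphic_prepend_prepend [Finite A] {u : List A} (hu : u ≠ [])
    (hv : ∀ n, applyIter f n v ≠ []) (hz : IsWordImage f (prepend v z) z) :
    IsMorphic (prepend u (prepend v z)) := by
  obtain ⟨a, u, rfl⟩ := List.exists_cons_of_ne_nil hu
  -- The letters of `u` after the first are coded by fresh letters `Sum.inr i` that `g` erases, and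
  -- the first by the letter `none` on which the new morphism is prolongable.
  let g : A ⊕ Fin u.length → List (A ⊕ Fin u.length) :=
    Sum.elim (fun e => (f e).map Sum.inl) fun _ => []
  have hg : ∀ e, g (Sum.inl e) = (f e).map Sum.inl := fun _ => rfl
  let u' : List (A ⊕ Fin u.length) := List.ofFn Sum.inr
  have hu' : applyMorphism g u' = [] := by simp [applyMorphism, u', g]
  have hv' : ∀ n, applyIter g n (u' ++ v.map Sum.inl) ≠ [] := by
    simp [applyIter_append, applyIter_map f hg, hv]
  have hz' : IsWordImage g (prepend (u' ++ v.map Sum.inl) (Sum.inl ∘ z)) (Sum.inl ∘ z) := by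
    rw [prepend_append, ← comp_prepend, ← prepend_nil (Sum.inl ∘ z), ← hu']
    exact (isWordImage_prepend_iff u').2 (hz.map hg)
  have hcode : prepend (a :: u) (prepend v z) =
      (fun o => o.elim a (Sum.elim id u.get)) ∘
        prepend [none] (some ∘ prepend (u' ++ v.map Sum.inl) (Sum.inl ∘ z)) := by
    rw [comp_prepend, ← Function.comp_assoc, comp_prepend, ← prepend_append, ← prepend_append]
    simp [u', Function.comp_def, List.map_ofFn]
  rw [hcode]
  exact (isPureMorphic_prepend_none hv' hz').isMorphic.comp _

theorem UltimatelyPeriodic.isMorphic [Finite A] {t : ℕ → A} (h : UltimatelyPeriodic t) :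
    IsMorphic t := by
  obtain ⟨N, p, hp, hper⟩ := h
  have ht := (isPrefixOfWord_wordPrefix t (N + 1)).eq_prepend
  simp only [length_wordPrefix] at ht
  set z : ℕ → A := fun n => t (N + 1 + n)
  have hzp (n : ℕ) : z (p + n) = z n :=
    (congrArg t (by omega)).trans (hper (N + 1 + n) (by omega))
  have hz : z = prepend (wordPrefix z p) z := by
    simpa only [length_wordPrefix, hzp] using (isPrefixOfWord_wordPrefix z p).eq_prepend
  have hid : applyMorphism (fun a : A => [a]) = id := funext List.flatMap_singleton'
  rw [ht, hz]
  refine isMorphic_prepend_prepend (f := fun a => [a]) ?_ (fun n => ?_) ?_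
  · simp [← List.length_pos_iff]
  · simp [applyIter, hid, ← List.length_pos_iff, hp]
  · rw [← hz]
    exact fun n => by simpa [hid] using isPrefixOfWord_wordPrefix z n

end MorphicWords

section BoundedWords

variable {A : Type*} {f : A → List A} {u v w : List A}

/-- A word is bounded for `f` if its images under the iterates of `f` have bounded length;
otherwise it is growing. -/
def IsBoundedWord (f : A → List A) (w : List A) : Prop :=
  ∃ K, ∀ n, (applyIter f n w).length ≤ K

theorem isBoundedWord_nil (f : A → List A) : IsBoundedWord f [] :=
  ⟨0, fun n => by simp [applyIter_nil]⟩

theorem isBoundedWord_append :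
    IsBoundedWord f (u ++ v) ↔ IsBoundedWord f u ∧ IsBoundedWord f v := by
  simp only [IsBoundedWord, applyIter_append, List.length_append]
  constructor
  · rintro ⟨K, hK⟩
    exact ⟨⟨K, fun n => le_of_add_le_left (hK n)⟩, ⟨K, fun n => le_of_add_le_right (hK n)⟩⟩
  · rintro ⟨⟨K, hK⟩, ⟨L, hL⟩⟩
    exact ⟨K + L, fun n => add_le_add (hK n) (hL n)⟩

theorem isBoundedWord_cons {c : A} :
    IsBoundedWord f (c :: w) ↔ IsBoundedWord f [c] ∧ IsBoundedWord f w :=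
  isBoundedWord_append (u := [c])

theorem IsBoundedWord.of_infix (hv : IsBoundedWord f v) (h : w <:+: v) : IsBoundedWord f w := by
  obtain ⟨l, r, rfl⟩ := h
  exact (isBoundedWord_append.1 (isBoundedWord_append.1 hv).1).2

theorem isBoundedWord_applyMorphism :
    IsBoundedWord f (applyMorphism f w) ↔ IsBoundedWord f w := by
  refine ⟨fun ⟨K, hK⟩ => ⟨max K w.length, fun n => ?_⟩, fun ⟨K, hK⟩ => ⟨K, fun n => hK (n + 1)⟩⟩
  cases n with
  | zero => exact le_max_right _ _
  | succ n => exact (hK n).trans (le_max_left _ _)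

theorem isBoundedWord_applyIter (n : ℕ) :
    IsBoundedWord f (applyIter f n w) ↔ IsBoundedWord f w := by
  induction n generalizing w with
  | zero => rfl
  | succ n ih => rw [applyIter_succ, ih, isBoundedWord_applyMorphism]

theorem isBoundedWord_reverse :
    IsBoundedWord (fun c => (f c).reverse) w.reverse ↔ IsBoundedWord f w := by
  simp only [IsBoundedWord, applyIter_reverse, List.length_reverse]

theorem isBoundedWord_of_applyMorphism_eq_append (h : applyMorphism f u = u ++ v) {n : ℕ}
    (hv : applyIter f n v = []) : IsBoundedWord f u := by
  have hsucc (k : ℕ) : applyIter f (k + 1) u = applyIter f k u ++ applyIter f k v := by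
    rw [applyIter_succ, h, applyIter_append]
  have hmono : Monotone fun k => (applyIter f k u).length :=
    monotone_nat_of_le_succ fun k => by simp [hsucc]
  have hstable (k : ℕ) : applyIter f (k + n) u = applyIter f n u := by
    induction k with
    | zero => rw [zero_add]
    | succ k ih => rw [add_right_comm, hsucc, ih, applyIter_add, hv, applyIter_nil, List.append_nil]
  exact ⟨_, fun k => (hmono (Nat.le_add_right k n)).trans_eq (congrArg _ (hstable k))⟩

theorem isMorphic_of_growing_prefix [Finite A] {t : ℕ → A} (hfix : IsWordImage f t t)
    (h : ∃ n, ¬ IsBoundedWord f (wordPrefix t n)) : IsMorphic t := by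
  classical
  set u := wordPrefix t (Nat.find h) with hu_def
  have hut : IsPrefixOfWord u t := isPrefixOfWord_wordPrefix _ _
  have hu : ¬ IsBoundedWord f u := Nat.find_spec h
  have hfut : IsPrefixOfWord (applyMorphism f u) t := hfix.isPrefixOfWord hut
  have hle : u.length ≤ (applyMorphism f u).length := by
    rw [hu_def, length_wordPrefix]
    refine Nat.find_min' h ?_
    rwa [hfut, isBoundedWord_applyMorphism]
  obtain ⟨v, hv⟩ := hut.prefix_of_length_le hfut hle
  set z : ℕ → A := fun n => t ((applyMorphism f u).length + n)
  have htz : t = prepend (applyMorphism f u) z := hfut.eq_prepend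
  have htvz : t = prepend u (prepend v z) := by rw [htz, ← hv, prepend_append]
  rw [htvz]
  refine isMorphic_prepend_prepend (f := f) ?_ (fun n hn => ?_) ?_
  · rintro h0
    exact hu (h0 ▸ isBoundedWord_nil f)
  · exact hu (isBoundedWord_of_applyMorphism_eq_append hv.symm hn)
  · rwa [← isWordImage_prepend_iff u, ← htvz, ← htz]

/-- `d` is the first growing letter of `w`. -/
def IsFirstGrowing (f : A → List A) (w : List A) (d : A) : Prop :=
  ∃ l r, w = l ++ d :: r ∧ IsBoundedWord f l ∧ ¬ IsBoundedWord f [d]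

theorem exists_isFirstGrowing (h : ¬ IsBoundedWord f w) : ∃ d, IsFirstGrowing f w d := by
  induction w with
  | nil => exact absurd (isBoundedWord_nil f) h
  | cons c w ih =>
    by_cases hc : IsBoundedWord f [c]
    · obtain ⟨d, l, r, rfl, hl, hd⟩ := ih fun hw => h (isBoundedWord_cons.2 ⟨hc, hw⟩)
      exact ⟨d, c :: l, r, rfl, isBoundedWord_cons.2 ⟨hc, hl⟩, hd⟩
    · exact ⟨c, [], w, rfl, isBoundedWord_nil f, hc⟩

theorem IsFirstGrowing.not_isBoundedWord_singleton {d : A} (h : IsFirstGrowing f w d) :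
    ¬ IsBoundedWord f [d] := by
  obtain ⟨-, -, -, -, hd⟩ := h
  exact hd

theorem IsFirstGrowing.unique {d e : A} (hd : IsFirstGrowing f w d) (he : IsFirstGrowing f w e) :
    d = e := by
  obtain ⟨l, r, rfl, hl, hd⟩ := hd
  obtain ⟨l', r', heq, hl', he⟩ := he
  rcases List.append_eq_append_iff.1 heq with ⟨s, rfl, hs⟩ | ⟨s, rfl, hs⟩ <;> cases s
  · simp_all
  · grind [isBoundedWord_append, isBoundedWord_cons]
  · simp_all
  · grind [isBoundedWord_append, isBoundedWord_cons]

theorem IsFirstGrowing.applyIter_trans {d e : A} {n : ℕ} (hd : IsFirstGrowing f w d)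
    (he : IsFirstGrowing f (applyIter f n [d]) e) : IsFirstGrowing f (applyIter f n w) e := by
  obtain ⟨l, r, rfl, hl, -⟩ := hd
  obtain ⟨l', r', hd, hl', he⟩ := he
  refine ⟨applyIter f n l ++ l', r' ++ applyIter f n r, ?_,
    isBoundedWord_append.2 ⟨(isBoundedWord_applyIter n).2 hl, hl'⟩, he⟩
  rw [applyIter_append, applyIter_cons, hd]
  simp

end BoundedWords

section PeriodDefects

variable {A : Type*} {p : ℕ} {u v w : List A}

open Classical in
/-- The positions at which `w` fails to have period `p`. Since `w[i]?` is `none` out of range,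
only positions `i` with `i + p < w.length` are counted. -/
noncomputable def periodDefects (p : ℕ) (w : List A) : Finset ℕ :=
  {i ∈ Finset.range (w.length - p) | w[i]? ≠ w[i + p]?}

theorem mem_periodDefects {i : ℕ} :
    i ∈ periodDefects p w ↔ i + p < w.length ∧ w[i]? ≠ w[i + p]? := by
  simp [periodDefects, Nat.lt_sub_iff_add_lt]

theorem periodDefects_eq_empty_of_hasPeriod (h : w.HasPeriod p) : periodDefects p w = ∅ :=
  Finset.eq_empty_of_forall_notMem fun i hi =>
    (mem_periodDefects.1 hi).2 (List.hasPeriod_iff_getElem?.1 h i (by grind [mem_periodDefects]))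

theorem card_periodDefects_le_length (p : ℕ) (w : List A) :
    (periodDefects p w).card ≤ w.length := by
  have hsub : periodDefects p w ⊆ Finset.range w.length := fun i hi =>
    Finset.mem_range.2 (Nat.lt_of_add_right_lt (mem_periodDefects.1 hi).1)
  simpa using Finset.card_le_card hsub

theorem card_periodDefects_append_le (p : ℕ) (u v : List A) :
    (periodDefects p (u ++ v)).card ≤ (periodDefects p u).card + (periodDefects p v).card + p := by
  have hsub : periodDefects p (u ++ v) ⊆
      periodDefects p u ∪ (periodDefects p v).image (· + u.length) ∪
        Finset.Ico (u.length - p) u.length := by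
    intro i hi
    simp only [Finset.mem_union, Finset.mem_image, Finset.mem_Ico, mem_periodDefects] at hi ⊢
    obtain ⟨hlen, hne⟩ := hi
    rcases lt_or_ge (i + p) u.length with hu | hu
    · exact .inl (.inl ⟨hu, by grind⟩)
    rcases lt_or_ge i u.length with hi | hi
    · exact .inr (by omega)
    · exact .inl (.inr ⟨i - u.length, by grind⟩)
  refine (Finset.card_le_card hsub).trans <| (Finset.card_union_le _ _).trans <|
    add_le_add ((Finset.card_union_le _ _).trans ?_) ?_
  · exact Nat.add_le_add_left Finset.card_image_le _
  · rw [Nat.card_Ico]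
    omega

theorem card_periodDefects_le_of_infix (h : u <:+: w) (p : ℕ) :
    (periodDefects p u).card ≤ (periodDefects p w).card := by
  obtain ⟨l, r, rfl⟩ := h
  refine Finset.card_le_card_of_injOn (l.length + ·) (fun i hi => ?_) (add_right_injective _).injOn
  simp only [Finset.mem_coe, mem_periodDefects, List.append_assoc, List.length_append, add_assoc,
    List.getElem?_append_right (Nat.le_add_right _ _), Nat.add_sub_cancel_left] at hi ⊢
  grind

theorem card_periodDefects_reverse_le (p : ℕ) (w : List A) :
    (periodDefects p w.reverse).card ≤ (periodDefects p w).card := by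
  refine Finset.card_le_card_of_injOn (w.length - p - 1 - ·) (fun i hi => ?_)
    fun i hi j hj hij => ?_
  · simp only [Finset.mem_coe, mem_periodDefects, List.length_reverse] at hi ⊢
    grind
  · simp only [Finset.mem_coe, mem_periodDefects, List.length_reverse] at hi hj hij
    omega

theorem hasPeriod_flatten_replicate (k : ℕ) (h : v ≠ [] → v.length ∣ p) :
    (List.replicate k v).flatten.HasPeriod p := by
  rcases eq_or_ne v [] with rfl | hne
  · rw [List.flatten_replicate_nil]
    exact List.hasPeriod_empty p
  have hv : (List.replicate k v).flatten.HasPeriod v.length := by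
    cases k with
    | zero => exact List.hasPeriod_empty _
    | succ k =>
      have hcomm : v ++ (List.replicate k v).flatten = (List.replicate k v).flatten ++ v := by
        rw [← List.flatten_cons, ← List.replicate_succ, List.replicate_succ', List.flatten_concat]
      rw [List.HasPeriod, List.replicate_succ, List.flatten_cons, List.take_left,
        List.prefix_append_right_inj, hcomm]
      exact List.prefix_append _ _
  rw [List.hasPeriod_iff_forall_getElem?_mod] at hv ⊢
  intro i hi
  rw [hv i hi, hv (i % p) ((Nat.mod_le i p).trans_lt hi), Nat.mod_mod_of_dvd i (h hne)]

theorem ultimatelyPeriodic_of_card_periodDefects_le {t : ℕ → A} {C : ℕ} (hp : 0 < p)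
    (h : ∀ n, (periodDefects p (wordPrefix t n)).card ≤ C) : UltimatelyPeriodic t := by
  have hfin : {i | t (i + p) ≠ t i}.Finite := by
    by_contra hinf
    obtain ⟨s, hs, hcard⟩ := Set.Infinite.exists_subset_card_eq hinf (C + 1)
    obtain ⟨N, hN⟩ := s.bddAbove
    have hsub : s ⊆ periodDefects p (wordPrefix t (N + p + 1)) := fun i hi => by
      have hiN : i ≤ N := hN hi
      have hne : t (i + p) ≠ t i := hs hi
      have hi' : i < N + p + 1 := by omega
      simp [mem_periodDefects, hiN, hi', hne.symm]
    have := (Finset.card_le_card hsub).trans (h _)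
    omega
  obtain ⟨N, hN⟩ := hfin.bddAbove
  exact ⟨N + 1, p, hp, fun n hn => by_contra fun hne => absurd (hN hne) (by omega)⟩

end PeriodDefects

section BoundedPrefixes

open Filter
open scoped Nat

variable {A : Type*} {f : A → List A} {p : ℕ} {q w l r : List A} {d : A}

/-- The bounded prefixes of the words `fⁿ(w)` have period `p` up to a number of defects that does
not depend on `n`. Here bounded means bounded for `f`: the prefixes may be arbitrarily long. -/
def HasBoundedPrefixDefects (f : A → List A) (p : ℕ) (w : List A) : Prop :=
  ∃ C, ∀ n q, q <+: applyIter f n w → IsBoundedWord f q → (periodDefects p q).card ≤ C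

theorem IsBoundedWord.hasBoundedPrefixDefects (hw : IsBoundedWord f w) (p : ℕ) :
    HasBoundedPrefixDefects f p w := by
  obtain ⟨K, hK⟩ := hw
  exact ⟨K, fun n q hq _ => (card_periodDefects_le_length p q).trans (hq.length_le.trans (hK n))⟩

theorem hasBoundedPrefixDefects_of_applyIter {m : ℕ}
    (h : HasBoundedPrefixDefects f p (applyIter f m w)) : HasBoundedPrefixDefects f p w := by
  induction m generalizing w with
  | zero => exact h
  | succ m ih =>
    obtain ⟨C, hC⟩ := ih (w := applyMorphism f w) h
    refine ⟨max C w.length, fun n q hq hb => ?_⟩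
    cases n with
    | zero =>
      exact (card_periodDefects_le_length p q).trans (hq.length_le.trans (le_max_right _ _))
    | succ n => exact (hC n q hq hb).trans (le_max_left _ _)

theorem exists_prefix_append_of_growing {m : ℕ} (hq : q <+: applyIter f m (l ++ d :: r))
    (hqb : IsBoundedWord f q) (hd : ¬ IsBoundedWord f [d]) :
    ∃ q', IsBoundedWord f q' ∧ q' <+: applyIter f m [d] ∧ q <+: applyIter f m l ++ q' := by
  rw [applyIter_append, applyIter_cons] at hq
  rcases List.prefix_or_prefix_of_prefix hq (List.prefix_append _ _) with hql | ⟨q', rfl⟩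
  · exact ⟨[], isBoundedWord_nil f, List.nil_prefix, by simpa using hql⟩
  rw [List.prefix_append_right_inj] at hq
  have hqb' := hqb.of_infix (List.suffix_append _ q').isInfix
  rcases List.prefix_or_prefix_of_prefix hq (List.prefix_append _ _) with hq' | hdq
  · exact ⟨q', hqb', hq', List.prefix_rfl⟩
  · exact absurd ((isBoundedWord_applyIter m).1 (hqb'.of_infix hdq.isInfix)) hd

theorem IsFirstGrowing.hasBoundedPrefixDefects (hw : IsFirstGrowing f w d)
    (h : HasBoundedPrefixDefects f p [d]) : HasBoundedPrefixDefects f p w := by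
  obtain ⟨l, r, rfl, ⟨K, hK⟩, hd⟩ := hw
  obtain ⟨C, hC⟩ := h
  refine ⟨K + C + p, fun n q hq hqb => ?_⟩
  obtain ⟨q', hqb', hq', hqq'⟩ := exists_prefix_append_of_growing hq hqb hd
  calc (periodDefects p q).card
      ≤ (periodDefects p (applyIter f n l ++ q')).card :=
        card_periodDefects_le_of_infix hqq'.isInfix p
    _ ≤ (periodDefects p (applyIter f n l)).card + (periodDefects p q').card + p :=
        card_periodDefects_append_le p _ _
    _ ≤ K + C + p := by
        gcongr
        · exact (card_periodDefects_le_length p _).trans (hK n)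
        · exact hC n q' hq' hqb'

theorem exists_applyIter_add_mul_eq [Finite A] (f : A → List A) :
    ∃ i P, 0 < P ∧ ∀ l, IsBoundedWord f l → ∀ n, i ≤ n → ∀ k,
      applyIter f (n + k * P) l = applyIter f n l := by
  choose K hK using fun c : {c : A // IsBoundedWord f [c]} => c.2
  let S : Set ({c : A // IsBoundedWord f [c]} → List A) := Set.univ.pi fun c => {u | u.length ≤ K c}
  have hS : S.Finite := Set.Finite.pi fun c => List.finite_length_le A (K c)
  have hmem (n : ℕ) : (fun c => applyIter f n [c.1]) ∈ S := fun c _ => hK c n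
  obtain ⟨i, j, hij, heq⟩ := hS.exists_lt_map_eq_of_forall_mem hmem
  have hword (l : List A) (hl : IsBoundedWord f l) : applyIter f j l = applyIter f i l := by
    induction l with
    | nil => rw [applyIter_nil, applyIter_nil]
    | cons c l ih =>
      rw [isBoundedWord_cons] at hl
      rw [applyIter_cons, ih hl.2, applyIter_cons f i, ← congrFun heq ⟨c, hl.1⟩]
  refine ⟨i, j - i, by omega, fun l hl n hn k => ?_⟩
  induction k with
  | zero => rw [zero_mul, add_zero]
  | succ k ih =>
    calc applyIter f (n + (k + 1) * (j - i)) l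
        = applyIter f ((n - i) + k * (j - i)) (applyIter f j l) := by
          rw [← applyIter_add, add_one_mul]
          congr 1
          omega
      _ = applyIter f (n + k * (j - i)) l := by
          rw [hword l hl, ← applyIter_add]
          congr 1
          omega
      _ = applyIter f n l := ih

theorem exists_prefix_flatten_replicate_append {n P : ℕ} (hd : ¬ IsBoundedWord f [d])
    (hdP : applyIter f P [d] = l ++ d :: r)
    (hl : ∀ k, applyIter f (n + k * P) l = applyIter f n l) (k : ℕ)
    (hq : q <+: applyIter f (n + k * P) [d]) (hqb : IsBoundedWord f q) :
    ∃ q', q' <+: applyIter f n [d] ∧ q <+: (List.replicate k (applyIter f n l)).flatten ++ q' := by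
  induction k generalizing q with
  | zero => exact ⟨q, by simpa using hq, List.prefix_rfl⟩
  | succ k ih =>
    rw [add_one_mul, ← add_assoc, applyIter_add, hdP] at hq
    obtain ⟨q₁, hqb₁, hq₁, hqq₁⟩ := exists_prefix_append_of_growing hq hqb hd
    obtain ⟨q', hq', hqq'⟩ := ih hq₁ hqb₁
    refine ⟨q', hq', hqq₁.trans ?_⟩
    rwa [hl, List.replicate_succ, List.flatten_cons, List.append_assoc,
      List.prefix_append_right_inj]

theorem eventually_hasBoundedPrefixDefects_of_applyIter_eq {i P : ℕ} (hP : 0 < P)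
    (hd : ¬ IsBoundedWord f [d]) (hdP : applyIter f P [d] = l ++ d :: r)
    (hlb : IsBoundedWord f l)
    (hl : ∀ n, i ≤ n → ∀ k, applyIter f (n + k * P) l = applyIter f n l) :
    ∀ᶠ K in atTop, HasBoundedPrefixDefects f K ! [d] := by
  obtain ⟨K₀, hK₀⟩ := hlb
  filter_upwards [eventually_ge_atTop K₀] with K hK
  refine hasBoundedPrefixDefects_of_applyIter (m := i) ?_
  let C := (Finset.range P).sup fun s => (applyIter f (s + i) [d]).length
  refine ⟨C + K !, fun N q hq hqb => ?_⟩
  have hN : N + i = N % P + i + N / P * P := by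
    conv_lhs => rw [← Nat.mod_add_div' N P]
    ring
  rw [← applyIter_add, hN] at hq
  obtain ⟨q', hq', hqq'⟩ := exists_prefix_flatten_replicate_append hd hdP
    (hl (N % P + i) (Nat.le_add_left _ _)) _ hq hqb
  set v := applyIter f (N % P + i) l
  have hperiod : (List.replicate (N / P) v).flatten.HasPeriod K ! :=
    hasPeriod_flatten_replicate _ fun hv =>
      Nat.dvd_factorial (List.length_pos_iff.2 hv) ((hK₀ _).trans hK)
  calc (periodDefects K ! q).card
      ≤ (periodDefects K ! ((List.replicate (N / P) v).flatten ++ q')).card :=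
        card_periodDefects_le_of_infix hqq'.isInfix _
    _ ≤ 0 + (periodDefects K ! q').card + K ! := by
        simpa [periodDefects_eq_empty_of_hasPeriod hperiod] using
          card_periodDefects_append_le (K !) (List.replicate (N / P) v).flatten q'
    _ ≤ C + K ! := by
        rw [zero_add]
        gcongr
        exact (card_periodDefects_le_length _ q').trans <| hq'.length_le.trans <|
          Finset.le_sup (f := fun s => (applyIter f (s + i) [d]).length)
            (Finset.mem_range.2 (Nat.mod_lt N hP))

theorem exists_isFirstGrowing_applyIter_self [Finite A] {c : A} (hc : ¬ IsBoundedWord f [c])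
    (P : ℕ) : ∃ n k d, 0 < k ∧ IsFirstGrowing f (applyIter f n [c]) d ∧
      IsFirstGrowing f (applyIter f (k * P) [d]) d := by
  choose D hD using fun n =>
    exists_isFirstGrowing (w := applyIter f n [c]) (mt (isBoundedWord_applyIter n).1 hc)
  obtain ⟨a, b, hab, hDab⟩ :
      ∃ a b, a < b ∧ D (a * P) = D (b * P) := by
    obtain ⟨a, b, hne, h⟩ := Finite.exists_ne_map_eq_of_infinite fun k => D (k * P)
    rcases hne.lt_or_gt with hlt | hlt
    exacts [⟨a, b, hlt, h⟩, ⟨b, a, hlt, h.symm⟩]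
  have hd := hD (a * P)
  obtain ⟨e, he⟩ := exists_isFirstGrowing (f := f) (w := applyIter f ((b - a) * P) [D (a * P)])
    (mt (isBoundedWord_applyIter _).1 hd.not_isBoundedWord_singleton)
  have heb : e = D (b * P) := by
    refine (hd.applyIter_trans he).unique ?_
    rw [← applyIter_add, ← add_mul, Nat.sub_add_cancel hab.le]
    exact hD _
  refine ⟨a * P, b - a, D (a * P), by omega, hd, ?_⟩
  rwa [heb, ← hDab] at he

theorem eventually_hasBoundedPrefixDefects [Finite A] (f : A → List A) :
    ∀ᶠ K in atTop, ∀ w, HasBoundedPrefixDefects f K ! w := by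
  obtain ⟨i, P, hP, hper⟩ := exists_applyIter_add_mul_eq f
  have hletter (c : A) : ∀ᶠ K in atTop, HasBoundedPrefixDefects f K ! [c] := by
    by_cases hc : IsBoundedWord f [c]
    · exact .of_forall fun K => hc.hasBoundedPrefixDefects _
    obtain ⟨n, k, d, hk, hcd, l, r, hdk, hl, hd⟩ := exists_isFirstGrowing_applyIter_self hc P
    filter_upwards [eventually_hasBoundedPrefixDefects_of_applyIter_eq (Nat.mul_pos hk hP) hd hdk hl
      fun m hm j => by rw [← mul_assoc, hper l hl m hm]] with K hK
    exact hasBoundedPrefixDefects_of_applyIter (hcd.hasBoundedPrefixDefects hK)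
  filter_upwards [eventually_all.2 hletter] with K hK w
  by_cases hw : IsBoundedWord f w
  · exact hw.hasBoundedPrefixDefects _
  · obtain ⟨d, hd⟩ := exists_isFirstGrowing hw
    exact hd.hasBoundedPrefixDefects (hK d)

end BoundedPrefixes

section SubstitutionShift

variable {A : Type*} {f : A → List A} {p : ℕ} {t : ℕ → A}

theorem HasBoundedPrefixDefects.exists_card_le_of_suffix {w : List A}
    (h : HasBoundedPrefixDefects (fun c => (f c).reverse) p w.reverse) :
    ∃ C, ∀ n q, q <:+ applyIter f n w → IsBoundedWord f q → (periodDefects p q).card ≤ C := by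
  obtain ⟨C, hC⟩ := h
  refine ⟨C, fun n q hq hqb => ?_⟩
  have hrev := hC n q.reverse (by rwa [applyIter_reverse, List.reverse_prefix])
    (isBoundedWord_reverse.2 hqb)
  simpa using (card_periodDefects_reverse_le p q.reverse).trans hrev

theorem exists_infix_letter_or_card_periodDefects_le
    (hpre : ∀ w, HasBoundedPrefixDefects f p w)
    (hsuf : ∀ w, HasBoundedPrefixDefects (fun c => (f c).reverse) p w) (w : List A) :
    ∃ C, ∀ n q, q <:+: applyIter f n w → IsBoundedWord f q →
      (∃ e ∈ w, q <:+: applyIter f n [e]) ∨ (periodDefects p q).card ≤ C := by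
  induction w with
  | nil =>
    refine ⟨0, fun n q hq _ => .inr ?_⟩
    rw [applyIter_nil] at hq
    exact (card_periodDefects_le_length p q).trans hq.length_le
  | cons e w ih =>
    obtain ⟨C, hC⟩ := ih
    obtain ⟨S, hS⟩ := (hsuf [e]).exists_card_le_of_suffix (w := [e])
    obtain ⟨R, hR⟩ := hpre w
    refine ⟨max C (S + R + p), fun n q hq hqb => ?_⟩
    rw [applyIter_cons, List.infix_append_iff] at hq
    rcases hq with hq | hq | ⟨l, r, rfl, hl, hr⟩
    · exact .inl ⟨e, List.mem_cons_self, hq⟩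
    · refine (hC n q hq hqb).imp ?_ le_max_of_le_left
      rintro ⟨e', he', hq⟩
      exact ⟨e', List.mem_cons_of_mem e he', hq⟩
    · rw [isBoundedWord_append] at hqb
      have hSl := hS n l hl hqb.1
      have hRr := hR n r hr hqb.2
      exact .inr <| le_max_of_le_right <| (card_periodDefects_append_le p l r).trans (by gcongr)

theorem exists_card_periodDefects_le_of_infix [Finite A] (f : A → List A) :
    ∃ p C, 0 < p ∧ ∀ n c q, q <:+: applyIter f n [c] → IsBoundedWord f q →
      (periodDefects p q).card ≤ C := by
  obtain ⟨K, hpre, hsuf⟩ := ((eventually_hasBoundedPrefixDefects f).and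
    (eventually_hasBoundedPrefixDefects fun c => (f c).reverse)).exists
  choose C hC using fun c => exists_infix_letter_or_card_periodDefects_le hpre hsuf (f c)
  obtain ⟨M, hM⟩ := Finite.exists_le C
  refine ⟨K.factorial, max M 1, K.factorial_pos, fun n => ?_⟩
  induction n with
  | zero =>
    exact fun c q hq _ => (card_periodDefects_le_length _ q).trans (le_max_of_le_right hq.length_le)
  | succ n ih =>
    intro c q hq hqb
    rw [applyIter_succ_singleton] at hq
    rcases hC c n q hq hqb with ⟨e, -, he⟩ | hcard
    · exact ih e q he hqb
    · exact le_max_of_le_left (hcard.trans (hM c))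

/-- The infinite word `t` belongs to the substitution shift of `f`: each of its factors occurs in
some `fⁿ(c)` with `c` a letter. -/
def InSubstitutionShift (f : A → List A) (t : ℕ → A) : Prop :=
  ∀ w, IsFactor w t → ∃ n c, w <:+: applyIter f n [c]

theorem InSubstitutionShift.ultimatelyPeriodic [Finite A] (ht : InSubstitutionShift f t)
    (hb : ∀ n, IsBoundedWord f (wordPrefix t n)) : UltimatelyPeriodic t := by
  obtain ⟨p, C, hp, hC⟩ := exists_card_periodDefects_le_of_infix f
  refine ultimatelyPeriodic_of_card_periodDefects_le hp (C := C) fun n => ?_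
  obtain ⟨m, c, hmc⟩ := ht _ (isPrefixOfWord_wordPrefix t n).isFactor
  exact hC m c _ hmc (hb n)

theorem IsGenerating.le_length_applyIter {a : A} (h : IsGenerating f a) (n : ℕ) :
    n ≤ (applyIter f n [a]).length := by
  obtain ⟨s, hs, -, hsn⟩ := h
  induction n with
  | zero => exact Nat.zero_le _
  | succ n ih =>
    rw [applyIter_succ_singleton, hs, applyIter_cons, List.length_append]
    exact add_le_add ih (List.length_pos_iff.2 (hsn n))

theorem IsPureMorphic.isPrefixOfWord_applyIter {a : A} {x : ℕ → A} (h : IsPureMorphic f a x)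
    (n : ℕ) : IsPrefixOfWord (applyIter f n [a]) x := by
  obtain ⟨rfl, -, himg⟩ := h
  induction n with
  | zero => exact isPrefixOfWord_wordPrefix x 1
  | succ n ih =>
    rw [applyIter_succ']
    exact himg.isPrefixOfWord ih

theorem IsPureMorphic.inSubstitutionShift {a : A} {x : ℕ → A} (h : IsPureMorphic f a x) :
    InSubstitutionShift f x := by
  intro w hw
  obtain ⟨u, hu⟩ := hw.exists_isPrefixOfWord_append
  refine ⟨(u ++ w).length, a, (List.suffix_append u w).isInfix.trans ?_⟩
  exact (hu.prefix_of_length_le (h.isPrefixOfWord_applyIter _)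
    (h.2.1.le_length_applyIter _)).isInfix

end SubstitutionShift

theorem stmt4_general {A : Type*} [Finite A] (f : A → List A) (t : ℕ → A)
    (ht : InSubstitutionShift f t) (hfix : IsWordImage f t t) : IsMorphic t := by
  by_cases h : ∃ n, ¬ IsBoundedWord f (wordPrefix t n)
  · exact isMorphic_of_growing_prefix hfix h
  · push Not at h
    exact (ht.ultimatelyPeriodic h).isMorphic

theorem stmt4 {A : Type*} [Fintype A] (f : A → List A) (a : A) (x : ℕ → A)
    (hx : IsPureMorphic f a x) (t : ℕ → A) (ht : InOrbitClosure t x)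
    (hfix : IsWordImage f t t) :
    IsMorphic t :=
  stmt4_general f t (fun w hw => hx.inSubstitutionShift w (ht w hw)) hfix
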